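/- Let G be a subgroup of U(2^N) such that the G-symmetric Clifford group C_{N,G} is a G-symmetric unitary 3-design. Define Q to be the subgroup of the Pauli group generated by {Q ∈ {I,X,Y,Z}^⊗N : ∃ G ∈ G with tr(G Q) ≠ 0}. Then U_{N,G} = U_{N,Q}, i.e., a unitary commutes with all elements of G if and only if it commutes with all elements of Q. -/

import Mathlib

open Matrix MeasureTheory

/-- Basis index for `N` qubits. -/
abbrev QubitIdx (N : ℕ) := Fin N → Fin 2

/-- Linear operators on the Hilbert space `(ℂ²)^⊗N`, as matrices. -/
abbrev Op (N : ℕ) := Matrix (QubitIdx N) (QubitIdx N) ℂ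

/-- The single-qubit Pauli matrices I, X, Y, Z. -/
noncomputable def σ1 : Fin 4 → Matrix (Fin 2) (Fin 2) ℂ
  | 0 => 1
  | 1 => !![0, 1; 1, 0]
  | 2 => !![0, -Complex.I; Complex.I, 0]
  | 3 => !![1, 0; 0, -1]

/-- The unsigned Pauli operator on `N` qubits indexed by `a : Fin N → Fin 4`
(the Kronecker product of the single-qubit Paulis `σ1 (a k)`). -/
noncomputable def pauli {N : ℕ} (a : Fin N → Fin 4) : Op N :=
  Matrix.of fun i j => ∏ k, σ1 (a k) (i k) (j k)

/-- The phase factors `{±1, ±i}`. -/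
def phases : Set ℂ := {1, -1, Complex.I, -Complex.I}

/-- The Pauli group on `N` qubits: phased unsigned Paulis. -/
def PauliGroup (N : ℕ) : Set (Op N) :=
  {P | ∃ c ∈ phases, ∃ a : Fin N → Fin 4, P = c • pauli a}

/-- A Clifford operator: a unitary whose conjugation action preserves the Pauli group. -/
def IsClifford {N : ℕ} (U : Op N) : Prop :=
  U ∈ Matrix.unitaryGroup (QubitIdx N) ℂ ∧
    ∀ P ∈ PauliGroup N, U * P * Uᴴ ∈ PauliGroup N

/-- The `G`-symmetric unitary group `U_{N,G}`: unitaries commuting with every element of `G`. -/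
def UnitarySym (N : ℕ) (G : Set (Op N)) : Set (Op N) :=
  {U | U ∈ Matrix.unitaryGroup (QubitIdx N) ℂ ∧ ∀ g ∈ G, U * g = g * U}

/-- The `G`-symmetric Clifford group `C_{N,G}`. -/
def CliffordSym (N : ℕ) (G : Set (Op N)) : Set (Op N) :=
  {U | IsClifford U ∧ U ∈ UnitarySym N G}

/-- `G` is a subgroup of the unitary group on `N` qubits. -/
def IsUnitarySubgroup {N : ℕ} (G : Set (Op N)) : Prop :=
  (∀ g ∈ G, g ∈ Matrix.unitaryGroup (QubitIdx N) ℂ) ∧ (1 : Op N) ∈ G ∧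
    (∀ g ∈ G, ∀ h ∈ G, g * h ∈ G) ∧ (∀ g ∈ G, gᴴ ∈ G)

/-- Operators on the `t`-fold tensor power `H^⊗t` of the `N`-qubit Hilbert space. -/
abbrev BigOp (N t : ℕ) := Matrix (Fin t → QubitIdx N) (Fin t → QubitIdx N) ℂ

/-- The `t`-fold tensor (Kronecker) power `A^⊗t` of an operator `A`. -/
noncomputable def tpow {N : ℕ} (t : ℕ) (A : Op N) : BigOp N t :=
  Matrix.of fun i j => ∏ s, A (i s) (j s)

noncomputable instance OpMeasurableSpace {N : ℕ} : MeasurableSpace (Op N) := borel (Op N)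

/-- The `t`-fold twirling channel `Φ_{t,μ}(L) = ∫ U^⊗t L (U^⊗t)† dμ(U)`, defined entrywise. -/
noncomputable def twirl {N : ℕ} (t : ℕ) (μ : Measure (Op N)) (L : BigOp N t) : BigOp N t :=
  Matrix.of fun i j => ∫ U, (tpow t U * L * (tpow t U)ᴴ) i j ∂μ

/-- The Kronecker power `A^⊗N` of a single-qubit operator, as an operator on `N` qubits. -/
noncomputable def kronPow {N : ℕ} (A : Matrix (Fin 2) (Fin 2) ℂ) : Op N :=
  Matrix.of fun i j => ∏ k, A (i k) (j k)

/-- The single-qubit unitary `e^{iθZ}`. -/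
noncomputable def expZ (θ : ℝ) : Matrix (Fin 2) (Fin 2) ℂ :=
  !![Complex.exp ((θ : ℂ) * Complex.I), 0; 0, Complex.exp (-(θ : ℂ) * Complex.I)]

/-- The permutation operator `V_σ` on the threefold tensor power `H^⊗3`. -/
noncomputable def permOp {N : ℕ} (σ : Equiv.Perm (Fin 3)) : BigOp N 3 :=
  Matrix.of fun i j => if i = j ∘ ⇑σ⁻¹ then 1 else 0

/-- The tensor product `G₁ ⊗ G₂ ⊗ G₃` as an operator on `H^⊗3`. -/
noncomputable def tprod3 {N : ℕ} (G₁ G₂ G₃ : Op N) : BigOp N 3 :=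
  Matrix.of fun i j => G₁ (i 0) (j 0) * G₂ (i 1) (j 1) * G₃ (i 2) (j 2)

/-
Let `g ∈ G` and let `Q` be a Pauli operator with `tr (g Q) ≠ 0`. Conjugation by a symmetric
Clifford fixes `g`, so every member `P` of the Clifford orbit of `Q` has `tr (g P) = tr (g Q)`. Two
Pauli operators are trace-orthogonal or proportional, so distinct members of the orbit, having the
same nonzero pairing with `g`, are trace-orthogonal. The tensor `∑ P^⊗3` over the orbit is invariant
under the symmetric Cliffords, hence by the 3-design property under all symmetric unitaries. An
orthogonal decomposition of a cubic tensor is unique, so each symmetric unitary permutes the finite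
orbit. As symmetric unitaries have symmetric unitary roots of every order, this action is trivial,
and `Q` commutes with all of them. The converse inclusion holds because each `g ∈ G` is a linear
combination of such `Q`.
-/

open Unitary (conjStarAlgAut)

theorem iterate_factorial_ncard_eq_self {α : Type*} {s : Set α} (hs : s.Finite) {f : α → α}
    (hf : Set.InjOn f s) (hfs : Set.MapsTo f s s) {x : α} (hx : x ∈ s) :
    f^[s.ncard.factorial] x = x := by
  have := hs.to_subtype
  let e : Equiv.Perm s := Equiv.ofBijective (hfs.restrict f s s)
    (Finite.injective_iff_bijective.mp (hfs.restrict_inj.mpr hf))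
  have he : e ^ s.ncard.factorial = 1 := by
    rw [← Nat.card_coe_set_eq, ← Nat.card_perm, pow_card_eq_one']
  have h : (hfs.restrict f s s)^[s.ncard.factorial] ⟨x, hx⟩ = ⟨x, hx⟩ :=
    (congrFun (e.iterate_eq_pow _) _).trans (DFunLike.congr_fun he _)
  rw [hfs.iterate_restrict] at h
  exact congrArg Subtype.val h

section OrthogonalDecomposition

variable {K M : Type*} [Field K] [AddCommGroup M] [Module K M]

/- With first argument `x ∈ s` the left sum collapses to the term of `x`; with a second argument
`p ∈ t` not orthogonal to `x`, the right sum collapses to the term of `p`, so `B x = B p`. -/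
theorem subset_of_sum_bilin_cube_eq {B : LinearMap.BilinForm K M} (hB : B.IsSymm)
    (hsep : B.SeparatingLeft) {s t : Finset M} {c : K} (hc : c ≠ 0)
    (hs : (s : Set M).Pairwise fun p q => B p q = 0)
    (ht : (t : Set M).Pairwise fun p q => B p q = 0)
    (hsc : ∀ p ∈ s, B p p = c) (htc : ∀ p ∈ t, B p p = c)
    (h : ∀ x y z, ∑ p ∈ s, B p x * B p y * B p z = ∑ p ∈ t, B p x * B p y * B p z) :
    s ⊆ t := by
  intro x hx
  have hx_eval : ∀ y z, c * B x y * B x z = ∑ p ∈ t, B p x * B p y * B p z := by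
    intro y z
    rw [← h, Finset.sum_eq_single_of_mem x hx fun p hp hpx => by simp [hs hp hx hpx], hsc x hx]
  obtain ⟨p, hp, hpx⟩ : ∃ p ∈ t, B p x ≠ 0 := by
    by_contra! h0
    have hccc : c * c * c = 0 := by
      have := hx_eval x x
      rwa [hsc x hx, Finset.sum_eq_zero fun p hp => by rw [h0 p hp, zero_mul, zero_mul]] at this
    exact mul_ne_zero (mul_ne_zero hc hc) hc hccc
  have hxp : ∀ z, B x z = B p z := by
    intro z
    have hz := hx_eval p z
    rw [Finset.sum_eq_single_of_mem p hp fun q hq hqp => by simp [ht hq hp hqp], htc p hp,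
      hB.eq x p, mul_comm c] at hz
    exact mul_left_cancel₀ (mul_ne_zero hpx hc) hz
  have : x = p := sub_eq_zero.mp <| hsep _ fun z => by
    rw [map_sub, LinearMap.sub_apply, hxp, sub_self]
  exact this ▸ hp

end OrthogonalDecomposition

section Unitary

theorem commute_star_of_mem_unitary {M : Type*} [Monoid M] [StarMul M] {u a : M}
    (hu : u ∈ unitary M) (h : Commute u a) : Commute (star u) a :=
  h.units_inv_left (u := Unitary.toUnits ⟨u, hu⟩)

theorem conjStarAlgAut_eq_self_iff {R A : Type*} [CommSemiring R] [Semiring A] [StarRing A]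
    [Algebra R A] (u : unitary A) (a : A) :
    conjStarAlgAut R A u a = a ↔ Commute (u : A) a :=
  (Unitary.toUnits u).mul_inv_eq_iff_eq_mul

variable {A : Type*} [TopologicalSpace A] [Ring A] [StarRing A] [Algebra ℂ A]
  [ContinuousFunctionalCalculus ℂ A IsStarNormal] [IsTopologicalRing A] [T2Space A]

theorem exists_unitary_pow_eq_of_finite_spectrum {u : A} (hu : u ∈ unitary A)
    (hfin : (spectrum ℂ u).Finite) {k : ℕ} (hk : k ≠ 0) :
    ∃ v ∈ unitary A, v ^ k = u ∧ ∀ a, Commute u a → Commute v a := by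
  have hnormal : IsStarNormal u := isStarNormal_of_mem_unitary hu
  let root : ℂ → ℂ := fun z => z ^ (k⁻¹ : ℂ)
  have hcont : ContinuousOn root (spectrum ℂ u) := hfin.continuousOn root
  refine ⟨cfc root u, ?_, ?_, fun a h =>
    h.cfc (commute_star_of_mem_unitary hu h) root⟩
  · rw [cfc_unitary_iff root u]
    intro z hz
    have hz1 : ‖z‖ = 1 :=
      CStarRing.norm_of_mem_unitary (spectrum_subset_unitary_of_mem_unitary hu hz)
    have hroot : ‖root z‖ = 1 := by rw [Complex.norm_cpow_inv_nat, hz1, Real.one_rpow]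
    rw [Complex.star_def, Complex.conj_mul', hroot]
    norm_num
  · rw [← cfc_pow root k u]
    simp only [root, Complex.cpow_nat_inv_pow _ hk, cfc_id' ℂ u]

end Unitary

section Matrix

variable {n R : Type*} [Fintype n] [DecidableEq n]

theorem trace_conjStarAlgAut [CommRing R] [StarRing R] (u : unitaryGroup n R)
    (A : Matrix n n R) : trace (conjStarAlgAut R (Matrix n n R) u A) = trace A := by
  rw [Unitary.conjStarAlgAut_apply, trace_mul_comm, ← mul_assoc, Unitary.coe_star_mul_self,
    one_mul]

/-- The trace pairing `(A, B) ↦ tr (A B)` on square matrices. Unlike in `Algebra.traceForm`,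
the trace is that of the matrix and not of left multiplication by it. -/
def traceForm (n R : Type*) [Fintype n] [DecidableEq n] [CommRing R] :
    LinearMap.BilinForm R (Matrix n n R) :=
  (LinearMap.mul R (Matrix n n R)).compr₂ (traceLinearMap n R R)

theorem traceForm_apply [CommRing R] (A B : Matrix n n R) :
    traceForm n R A B = trace (A * B) := rfl

theorem traceForm_isSymm [CommRing R] : (traceForm n R).IsSymm :=
  ⟨fun A B => trace_mul_comm A B⟩

theorem traceForm_separatingLeft [CommRing R] : (traceForm n R).SeparatingLeft := fun A hA =>
  ext_iff_trace_mul_right.mpr fun B => by simpa [traceForm_apply] using hA B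

end Matrix

section PiKronecker

variable {ι n R : Type*} [Fintype ι] [CommSemiring R]

/-- The Kronecker product `⨂ᵢ M i` of a finite family of square matrices; both `pauli` and `tpow`
are of this form. -/
def piKronecker (M : ι → Matrix n n R) : Matrix (ι → n) (ι → n) R :=
  of fun i j => ∏ k, M k (i k) (j k)

theorem piKronecker_mul [DecidableEq ι] [Fintype n] (M M' : ι → Matrix n n R) :
    piKronecker M * piKronecker M' = piKronecker (M * M') := by
  ext i j
  simp only [piKronecker, mul_apply, of_apply, Pi.mul_apply, Fintype.prod_sum,
    Finset.prod_mul_distrib]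

theorem trace_piKronecker [DecidableEq ι] [Fintype n] (M : ι → Matrix n n R) :
    trace (piKronecker M) = ∏ k, trace (M k) := by
  simp only [trace, diag, piKronecker, of_apply, Fintype.prod_sum]

theorem conjTranspose_piKronecker [StarRing R] (M : ι → Matrix n n R) :
    (piKronecker M)ᴴ = piKronecker (star M) := by
  ext i j
  simp [piKronecker]

end PiKronecker

section Pauli

theorem trace_σ1_mul_σ1 (a b : Fin 4) : trace (σ1 a * σ1 b) = if a = b then 2 else 0 := by
  fin_cases a <;> fin_cases b <;> simp [σ1, trace_fin_two, one_add_one_eq_two]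

theorem sum_σ1_mul_σ1 (i j k l : Fin 2) :
    ∑ a, σ1 a i j * σ1 a k l = if i = l ∧ j = k then 2 else 0 := by
  fin_cases i <;> fin_cases j <;> fin_cases k <;> fin_cases l <;>
    simp [σ1, Fin.sum_univ_four, one_add_one_eq_two]

variable {N : ℕ}

theorem pauli_eq_piKronecker (a : Fin N → Fin 4) : pauli a = piKronecker (σ1 ∘ a) := rfl

theorem trace_pauli_mul_pauli (a b : Fin N → Fin 4) :
    trace (pauli a * pauli b) = if a = b then 2 ^ N else 0 := by
  simp only [pauli_eq_piKronecker, piKronecker_mul, trace_piKronecker, Pi.mul_apply,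
    Function.comp_apply, trace_σ1_mul_σ1, Fintype.prod_ite_zero, Finset.prod_const,
    Finset.card_univ, Fintype.card_fin, funext_iff]

theorem sum_pauli_mul_pauli (i j k l : QubitIdx N) :
    ∑ a : Fin N → Fin 4, pauli a i j * pauli a k l = if i = l ∧ j = k then 2 ^ N else 0 := by
  simp only [pauli, of_apply, ← Finset.prod_mul_distrib]
  rw [← Fintype.prod_sum fun s b => σ1 b (i s) (j s) * σ1 b (k s) (l s)]
  simp only [sum_σ1_mul_σ1, Fintype.prod_ite_zero, Finset.prod_const, Finset.card_univ,
    Fintype.card_fin, funext_iff, forall_and]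

theorem sum_trace_smul_pauli (A : Op N) :
    ∑ a, trace (A * pauli a) • pauli a = (2 ^ N : ℂ) • A := by
  ext i j
  calc (∑ a, trace (A * pauli a) • pauli a) i j
      = ∑ a, ∑ l, ∑ k, A l k * (pauli a i j * pauli a k l) := by
        simp only [Matrix.sum_apply, Matrix.smul_apply, smul_eq_mul, trace, diag, mul_apply,
          Finset.sum_mul]
        exact Finset.sum_congr rfl fun a _ => Finset.sum_congr rfl fun l _ =>
          Finset.sum_congr rfl fun k _ => by ring
    _ = ∑ l, ∑ k, A l k * ∑ a, pauli a i j * pauli a k l := by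
        simp only [Finset.mul_sum]
        rw [Finset.sum_comm]
        exact Finset.sum_congr rfl fun l _ => Finset.sum_comm
    _ = ((2 ^ N : ℂ) • A) i j := by
        simp [sum_pauli_mul_pauli, ite_and, mul_comm]

/-- The unsigned Pauli operators having nonzero coefficient in the Pauli expansion of some element
of `G`. -/
def pauliSupport (G : Set (Op N)) : Set (Op N) :=
  {P | ∃ a : Fin N → Fin 4, P = pauli a ∧ ∃ g ∈ G, trace (g * pauli a) ≠ 0}

theorem subset_span_pauliSupport (G : Set (Op N)) : G ⊆ Submodule.span ℂ (pauliSupport G) := by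
  intro g hg
  have h2N : (2 ^ N : ℂ) ≠ 0 := pow_ne_zero N two_ne_zero
  rw [← inv_smul_smul₀ h2N g, ← sum_trace_smul_pauli]
  refine Submodule.smul_mem _ _ (Submodule.sum_mem _ fun a _ => ?_)
  by_cases hga : trace (g * pauli a) = 0
  · simp [hga]
  · exact Submodule.smul_mem _ _ (Submodule.subset_span ⟨a, rfl, g, hg, hga⟩)

theorem pauli_mem_pauliGroup (a : Fin N → Fin 4) : pauli a ∈ PauliGroup N :=
  ⟨1, Or.inl rfl, a, (one_smul ℂ _).symm⟩

theorem finite_pauliGroup (N : ℕ) : (PauliGroup N).Finite := by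
  have hphases : phases.Finite := by simp [phases]
  refine (hphases.image2 (fun c a => c • pauli a) (Set.finite_univ (α := Fin N → Fin 4))).subset ?_
  rintro P ⟨c, hc, a, rfl⟩
  exact Set.mem_image2_of_mem hc (Set.mem_univ a)

theorem trace_mul_self_ne_zero_of_mem_pauliGroup {P : Op N} (hP : P ∈ PauliGroup N) :
    trace (P * P) ≠ 0 := by
  obtain ⟨c, hc, a, rfl⟩ := hP
  have hc0 : c ≠ 0 := by
    rintro rfl
    simp [phases, Complex.I_ne_zero.symm] at hc
  simp [trace_pauli_mul_pauli, hc0]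

theorem trace_mul_eq_zero_of_mem_pauliGroup {A P P' : Op N} (hP : P ∈ PauliGroup N)
    (hP' : P' ∈ PauliGroup N) (hA : trace (A * P) ≠ 0) (hAP : trace (A * P) = trace (A * P'))
    (hne : P ≠ P') : trace (P * P') = 0 := by
  obtain ⟨c, -, a, rfl⟩ := hP
  obtain ⟨c', -, a', rfl⟩ := hP'
  rcases eq_or_ne a a' with rfl | ha
  · refine absurd ?_ hne
    simp only [Matrix.mul_smul, trace_smul, smul_eq_mul] at hA hAP
    rw [mul_right_cancel₀ (right_ne_zero_of_mul hA) hAP]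
  · simp [trace_pauli_mul_pauli, ha]

end Pauli

section TensorPower

variable {N t : ℕ}

theorem tpow_eq_piKronecker (A : Op N) : tpow t A = piKronecker fun _ => A := rfl

theorem tpow_mul (A B : Op N) : tpow t (A * B) = tpow t A * tpow t B :=
  (piKronecker_mul _ _).symm

theorem tpow_conjTranspose (A : Op N) : tpow t Aᴴ = (tpow t A)ᴴ :=
  (conjTranspose_piKronecker _).symm

theorem tpow_one : tpow t (1 : Op N) = 1 := by
  ext i j
  simp [tpow, one_apply, Fintype.prod_ite_zero, funext_iff]

theorem tpow_mem_unitaryGroup {U : Op N} (hU : U ∈ unitaryGroup (QubitIdx N) ℂ) :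
    tpow t U ∈ unitaryGroup (Fin t → QubitIdx N) ℂ := by
  rw [mem_unitaryGroup_iff, star_eq_conjTranspose, ← tpow_conjTranspose, ← tpow_mul,
    ← star_eq_conjTranspose, mem_unitaryGroup_iff.mp hU, tpow_one]

theorem continuous_tpow : Continuous (tpow t : Op N → BigOp N t) :=
  continuous_matrix fun i j =>
    show Continuous fun A : Op N => ∏ s, A (i s) (j s) from
      continuous_finsetProd _ fun s _ => continuous_id.matrix_elem (i s) (j s)

theorem trace_tpow_three_mul_piKronecker (A X Y Z : Op N) :
    trace (tpow 3 A * piKronecker ![X, Y, Z])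
      = trace (A * X) * trace (A * Y) * trace (A * Z) := by
  simp [tpow_eq_piKronecker, piKronecker_mul, trace_piKronecker, Fin.prod_univ_three]

theorem subset_of_sum_tpow_three_eq {s s' : Finset (Op N)} {c : ℂ} (hc : c ≠ 0)
    (hs : (s : Set (Op N)).Pairwise fun p q => trace (p * q) = 0)
    (hs' : (s' : Set (Op N)).Pairwise fun p q => trace (p * q) = 0)
    (hsc : ∀ p ∈ s, trace (p * p) = c) (hsc' : ∀ p ∈ s', trace (p * p) = c)
    (h : ∑ p ∈ s, tpow 3 p = ∑ p ∈ s', tpow 3 p) : s ⊆ s' := by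
  refine subset_of_sum_bilin_cube_eq traceForm_isSymm traceForm_separatingLeft hc hs hs' hsc hsc'
    fun X Y Z => ?_
  simp only [traceForm_apply, ← trace_tpow_three_mul_piKronecker, ← trace_sum, ← Finset.sum_mul, h]

theorem sum_image_conjStarAlgAut_tpow (s : Finset (Op N)) (u : unitaryGroup (QubitIdx N) ℂ) :
    ∑ p ∈ s.image (conjStarAlgAut ℂ (Op N) u), tpow t p
      = tpow t u * (∑ p ∈ s, tpow t p) * (tpow t u)ᴴ := by
  rw [Finset.sum_image (EquivLike.injective (conjStarAlgAut ℂ (Op N) u)).injOn, Finset.mul_sum,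
    Finset.sum_mul]
  exact Finset.sum_congr rfl fun p _ => by
    rw [Unitary.conjStarAlgAut_apply, star_eq_conjTranspose, tpow_mul, tpow_mul,
      tpow_conjTranspose]

end TensorPower

section Twirl

open scoped Matrix.Norms.L2Operator

variable {N t : ℕ} {μ : Measure (Op N)}

instance : BorelSpace (Op N) := ⟨rfl⟩

theorem continuous_tpow_conj (L : BigOp N t) :
    Continuous fun U : Op N => tpow t U * L * (tpow t U)ᴴ :=
  (continuous_tpow.mul continuous_const).mul continuous_tpow.matrix_conjTranspose

theorem integrable_tpow_conj [IsFiniteMeasure μ]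
    (hμ : ∀ᵐ U ∂μ, U ∈ unitaryGroup (QubitIdx N) ℂ) (L : BigOp N t) :
    Integrable (fun U => tpow t U * L * (tpow t U)ᴴ) μ := by
  refine Integrable.of_bound (continuous_tpow_conj L).aestronglyMeasurable ‖L‖ ?_
  filter_upwards [hμ] with U hU
  have htU := tpow_mem_unitaryGroup (t := t) hU
  rw [← star_eq_conjTranspose, CStarRing.norm_mul_mem_unitary _ (Unitary.star_mem htU),
    CStarRing.norm_mem_unitary_mul _ htU]

theorem twirl_eq_integral [IsFiniteMeasure μ]
    (hμ : ∀ᵐ U ∂μ, U ∈ unitaryGroup (QubitIdx N) ℂ) (L : BigOp N t) :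
    twirl t μ L = ∫ U, tpow t U * L * (tpow t U)ᴴ ∂μ := by
  ext i j
  exact (LinearMap.toContinuousLinearMap (entryLinearMap ℂ ℂ i j)).integral_comp_comm
    (integrable_tpow_conj hμ L)

theorem tpow_conj_twirl [IsFiniteMeasure μ]
    (hμ : ∀ᵐ U ∂μ, U ∈ unitaryGroup (QubitIdx N) ℂ) {V : Op N}
    (hV : Measure.map (fun U => V * U) μ = μ) (L : BigOp N t) :
    tpow t V * twirl t μ L * (tpow t V)ᴴ = twirl t μ L := by
  have hint := integrable_tpow_conj hμ L
  have hmeas : Measurable fun U : Op N => V * U := (continuous_const_mul V).measurable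
  rw [twirl_eq_integral hμ, ← integral_const_mul_of_integrable hint,
    ← integral_mul_const_of_integrable (hint.const_mul _)]
  conv_rhs => rw [← hV, integral_map hmeas.aemeasurable
    (continuous_tpow_conj L).aestronglyMeasurable]
  simp only [tpow_mul, conjTranspose_mul, mul_assoc]

theorem twirl_eq_self [IsProbabilityMeasure μ] {L : BigOp N t}
    (hL : ∀ᵐ U ∂μ, tpow t U * L * (tpow t U)ᴴ = L) : twirl t μ L = L := by
  ext i j
  rw [twirl, of_apply, integral_congr_ae (g := fun _ => L i j)
    (hL.mono fun U hU => congrFun₂ hU i j)]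
  simp

end Twirl

section Symmetric

variable {N : ℕ} {G : Set (Op N)}

theorem unitarySym_subset_of_subset_adjoin {S T : Set (Op N)}
    (h : T ⊆ Algebra.adjoin ℂ S) : UnitarySym N S ⊆ UnitarySym N T := by
  rintro U ⟨hU, hUS⟩
  have hUcent : U ∈ S.centralizer := fun g hg => (hUS g hg).symm
  exact ⟨hU, fun g hg => Algebra.adjoin_le_centralizer_centralizer ℂ S (h hg) U hUcent⟩

theorem unitarySym_closure (S : Set (Op N)) :
    UnitarySym N (Submonoid.closure S : Set (Op N)) = UnitarySym N S := by
  apply Set.Subset.antisymm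
  · exact unitarySym_subset_of_subset_adjoin
      (Submonoid.subset_closure.trans Algebra.subset_adjoin)
  · have h : Submonoid.closure S ≤ (Algebra.adjoin ℂ S).toSubmonoid :=
      Submonoid.closure_le.mpr Algebra.subset_adjoin
    exact unitarySym_subset_of_subset_adjoin h

theorem mul_mem_cliffordSym {U V : Op N} (hU : U ∈ CliffordSym N G)
    (hV : V ∈ CliffordSym N G) : U * V ∈ CliffordSym N G := by
  refine ⟨⟨mul_mem hU.1.1 hV.1.1, fun P hP => ?_⟩, mul_mem hU.1.1 hV.1.1, fun g hg => ?_⟩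
  · simpa only [conjTranspose_mul, mul_assoc] using hU.1.2 _ (hV.1.2 P hP)
  · exact Commute.mul_left (hU.2.2 g hg) (hV.2.2 g hg)

theorem one_mem_cliffordSym : (1 : Op N) ∈ CliffordSym N G :=
  ⟨⟨one_mem _, by simp⟩, one_mem _, by simp⟩

open scoped Matrix.Norms.L2Operator in
theorem exists_mem_unitarySym_pow_eq {U : Op N} (hU : U ∈ UnitarySym N G) {k : ℕ} (hk : k ≠ 0) :
    ∃ V ∈ UnitarySym N G, V ^ k = U := by
  obtain ⟨V, hV, hVk, hcomm⟩ :=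
    exists_unitary_pow_eq_of_finite_spectrum hU.1 (finite_spectrum U) hk
  exact ⟨V, ⟨hV, fun g hg => hcomm g (hU.2 g hg)⟩, hVk⟩

theorem tpow_conj_eq_self_of_twirl_eq {t : ℕ} {μC μU : Measure (Op N)} [IsProbabilityMeasure μC]
    [IsFiniteMeasure μU] (hCsupp : ∀ᵐ U ∂μC, U ∈ CliffordSym N G)
    (hUsupp : ∀ᵐ U ∂μU, U ∈ UnitarySym N G)
    (hdesign : ∀ L : BigOp N t, twirl t μC L = twirl t μU L)
    {L : BigOp N t} (hL : ∀ V ∈ CliffordSym N G, tpow t V * L * (tpow t V)ᴴ = L)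
    {U : Op N} (hU : Measure.map (fun W => U * W) μU = μU) :
    tpow t U * L * (tpow t U)ᴴ = L := by
  have htwirl : twirl t μU L = L := by
    rw [← hdesign, twirl_eq_self (hCsupp.mono hL)]
  have h := tpow_conj_twirl (hUsupp.mono fun _ hW => hW.1) hU L
  rwa [htwirl] at h

/-- The orbit of `Q` under conjugation by the `G`-symmetric Clifford group; the sum of the cubes
`P^⊗3` over it is the tensor to which the 3-design property is applied. -/
def cliffordOrbit (G : Set (Op N)) (Q : Op N) : Set (Op N) :=
  {P | ∃ u : unitaryGroup (QubitIdx N) ℂ, ↑u ∈ CliffordSym N G ∧ conjStarAlgAut ℂ (Op N) u Q = P}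

theorem mem_cliffordOrbit_self (Q : Op N) : Q ∈ cliffordOrbit G Q :=
  ⟨1, one_mem_cliffordSym, by rw [map_one]; rfl⟩

theorem mapsTo_cliffordOrbit {Q : Op N} {u : unitaryGroup (QubitIdx N) ℂ}
    (hu : ↑u ∈ CliffordSym N G) :
    Set.MapsTo (conjStarAlgAut ℂ (Op N) u) (cliffordOrbit G Q) (cliffordOrbit G Q) := by
  rintro _ ⟨v, hv, rfl⟩
  exact ⟨u * v, mul_mem_cliffordSym hu hv, by rw [map_mul]; rfl⟩

theorem cliffordOrbit_subset_pauliGroup {Q : Op N} (hQ : Q ∈ PauliGroup N) :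
    cliffordOrbit G Q ⊆ PauliGroup N := by
  rintro _ ⟨u, hu, rfl⟩
  exact hu.1.2 Q hQ

theorem trace_mul_self_of_mem_cliffordOrbit {P Q : Op N} (hP : P ∈ cliffordOrbit G Q) :
    trace (P * P) = trace (Q * Q) := by
  obtain ⟨u, -, rfl⟩ := hP
  rw [← map_mul, trace_conjStarAlgAut]

theorem trace_mul_of_mem_cliffordOrbit {g P Q : Op N} (hg : g ∈ G) (hP : P ∈ cliffordOrbit G Q) :
    trace (g * P) = trace (g * Q) := by
  obtain ⟨u, hu, rfl⟩ := hP
  have hug : conjStarAlgAut ℂ (Op N) u g = g := (conjStarAlgAut_eq_self_iff u g).mpr (hu.2.2 g hg)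
  rw [← trace_conjStarAlgAut u (g * Q), map_mul, hug]

theorem cliffordOrbit_pairwise_trace_mul_eq_zero {g Q : Op N} (hg : g ∈ G)
    (hQ : Q ∈ PauliGroup N) (hgQ : trace (g * Q) ≠ 0) :
    (cliffordOrbit G Q).Pairwise fun P P' => trace (P * P') = 0 := by
  intro P hP P' hP' hne
  refine trace_mul_eq_zero_of_mem_pauliGroup (A := g) (cliffordOrbit_subset_pauliGroup hQ hP)
    (cliffordOrbit_subset_pauliGroup hQ hP') ?_ ?_ hne
  · rwa [trace_mul_of_mem_cliffordOrbit hg hP]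
  · rw [trace_mul_of_mem_cliffordOrbit hg hP, trace_mul_of_mem_cliffordOrbit hg hP']

theorem tpow_conj_sum_cliffordOrbit {t : ℕ} {Q : Op N} (hfin : (cliffordOrbit G Q).Finite)
    {V : Op N} (hV : V ∈ CliffordSym N G) :
    tpow t V * (∑ P ∈ hfin.toFinset, tpow t P) * (tpow t V)ᴴ = ∑ P ∈ hfin.toFinset, tpow t P := by
  let u : unitaryGroup (QubitIdx N) ℂ := ⟨V, hV.1.1⟩
  have himage : hfin.toFinset.image (conjStarAlgAut ℂ (Op N) u) = hfin.toFinset := by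
    refine Finset.eq_of_subset_of_card_le ?_ ?_
    · have hmaps := mapsTo_cliffordOrbit (G := G) (Q := Q) (u := u) hV
      exact Finset.image_subset_iff.mpr fun P hP =>
        hfin.mem_toFinset.mpr (hmaps (hfin.mem_toFinset.mp hP))
    · rw [Finset.card_image_of_injective _ (EquivLike.injective _)]
  rw [← sum_image_conjStarAlgAut_tpow _ u, himage]

end Symmetric

section Design

variable {N : ℕ} {G : Set (Op N)} {μC μU : Measure (Op N)} [IsProbabilityMeasure μC]
  [IsFiniteMeasure μU]

theorem mapsTo_cliffordOrbit_of_twirl_eq (hCsupp : ∀ᵐ U ∂μC, U ∈ CliffordSym N G)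
    (hUsupp : ∀ᵐ U ∂μU, U ∈ UnitarySym N G)
    (hdesign : ∀ L : BigOp N 3, twirl 3 μC L = twirl 3 μU L)
    {g Q : Op N} (hg : g ∈ G) (hQ : Q ∈ PauliGroup N) (hgQ : trace (g * Q) ≠ 0)
    {u : unitaryGroup (QubitIdx N) ℂ} (hu : Measure.map (fun W => (u : Op N) * W) μU = μU) :
    Set.MapsTo (conjStarAlgAut ℂ (Op N) u) (cliffordOrbit G Q) (cliffordOrbit G Q) := by
  let f := conjStarAlgAut ℂ (Op N) u
  have hfin := (finite_pauliGroup N).subset (cliffordOrbit_subset_pauliGroup (G := G) hQ)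
  have horth := cliffordOrbit_pairwise_trace_mul_eq_zero hg hQ hgQ
  have htrace (A B : Op N) : trace (f A * f B) = trace (A * B) := by
    rw [← map_mul, trace_conjStarAlgAut]
  have hself : ∀ P ∈ hfin.toFinset, trace (P * P) = trace (Q * Q) := fun P hP =>
    trace_mul_self_of_mem_cliffordOrbit (hfin.mem_toFinset.mp hP)
  have hsum : ∑ P ∈ hfin.toFinset.image f, tpow 3 P = ∑ P ∈ hfin.toFinset, tpow 3 P := by
    rw [sum_image_conjStarAlgAut_tpow]
    exact tpow_conj_eq_self_of_twirl_eq hCsupp hUsupp hdesign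
      (fun V hV => tpow_conj_sum_cliffordOrbit hfin hV) hu
  have himage : hfin.toFinset.image f ⊆ hfin.toFinset := by
    refine subset_of_sum_tpow_three_eq (trace_mul_self_ne_zero_of_mem_pauliGroup hQ) ?_ ?_
      ?_ hself hsum
    · rw [Finset.coe_image, (EquivLike.injective f).injOn.pairwise_image, hfin.coe_toFinset]
      exact horth.imp fun {P P'} h => (htrace P P').trans h
    · rwa [hfin.coe_toFinset]
    · exact Finset.forall_mem_image.mpr fun P hP => (htrace P P).trans (hself P hP)
  exact fun P hP => hfin.mem_toFinset.mp <|
    himage (Finset.mem_image_of_mem f (hfin.mem_toFinset.mpr hP))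

theorem commute_of_twirl_eq (hCsupp : ∀ᵐ U ∂μC, U ∈ CliffordSym N G)
    (hUsupp : ∀ᵐ U ∂μU, U ∈ UnitarySym N G)
    (hUinvL : ∀ V ∈ UnitarySym N G, Measure.map (fun U => V * U) μU = μU)
    (hdesign : ∀ L : BigOp N 3, twirl 3 μC L = twirl 3 μU L)
    {g Q : Op N} (hg : g ∈ G) (hQ : Q ∈ PauliGroup N) (hgQ : trace (g * Q) ≠ 0)
    {U : Op N} (hU : U ∈ UnitarySym N G) : Commute U Q := by
  let k := (cliffordOrbit G Q).ncard.factorial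
  obtain ⟨V, hV, hVU⟩ := exists_mem_unitarySym_pow_eq hU (Nat.factorial_ne_zero _ : k ≠ 0)
  let v : unitaryGroup (QubitIdx N) ℂ := ⟨V, hV.1⟩
  have hmaps := mapsTo_cliffordOrbit_of_twirl_eq hCsupp hUsupp hdesign hg hQ hgQ
    (u := v) (hUinvL V hV)
  have hfix : (conjStarAlgAut ℂ (Op N) v)^[k] Q = Q :=
    iterate_factorial_ncard_eq_self
      ((finite_pauliGroup N).subset (cliffordOrbit_subset_pauliGroup hQ))
      (EquivLike.injective (conjStarAlgAut ℂ (Op N) v)).injOn hmaps (mem_cliffordOrbit_self Q)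
  rw [← StarAlgEquiv.coe_pow, ← map_pow, conjStarAlgAut_eq_self_iff] at hfix
  rwa [← hVU]

end Design

theorem stmt8_general {N : ℕ} (G : Set (Op N)) (μC μU : Measure (Op N)) [IsProbabilityMeasure μC]
    [IsFiniteMeasure μU]
    (hCsupp : ∀ᵐ U ∂μC, U ∈ CliffordSym N G)
    (hUsupp : ∀ᵐ U ∂μU, U ∈ UnitarySym N G)
    (hUinvL : ∀ V ∈ UnitarySym N G, Measure.map (fun U => V * U) μU = μU)
    (hdesign : ∀ L : BigOp N 3, twirl 3 μC L = twirl 3 μU L) :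
    UnitarySym N G = UnitarySym N (Submonoid.closure (pauliSupport G) : Set (Op N)) := by
  rw [unitarySym_closure]
  apply Set.Subset.antisymm
  · intro U hU
    refine ⟨hU.1, ?_⟩
    rintro _ ⟨a, rfl, g, hg, hga⟩
    exact commute_of_twirl_eq hCsupp hUsupp hUinvL hdesign hg (pauli_mem_pauliGroup a) hga hU
  · exact unitarySym_subset_of_subset_adjoin <|
      (subset_span_pauliSupport G).trans (Algebra.span_le_adjoin ℂ _)

/-- if `C_{N,G}` is a `G`-symmetric unitary 3-design, then `U_{N,G}` equals
the commutant of the Pauli subgroup `Q` generated by the unsigned Paulis appearing in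
some element of `G` with nonzero coefficient. -/
theorem stmt8 {N : ℕ} (G : Set (Op N)) (hG : IsUnitarySubgroup G)
    (μC μU : Measure (Op N)) [IsProbabilityMeasure μC] [IsProbabilityMeasure μU]
    (hCsupp : ∀ᵐ U ∂μC, U ∈ CliffordSym N G)
    (hUsupp : ∀ᵐ U ∂μU, U ∈ UnitarySym N G)
    (hCinvL : ∀ V ∈ CliffordSym N G, Measure.map (fun U => V * U) μC = μC)
    (hCinvR : ∀ V ∈ CliffordSym N G, Measure.map (fun U => U * V) μC = μC)
    (hUinvL : ∀ V ∈ UnitarySym N G, Measure.map (fun U => V * U) μU = μU)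
    (hUinvR : ∀ V ∈ UnitarySym N G, Measure.map (fun U => U * V) μU = μU)
    (hdesign : ∀ L : BigOp N 3, twirl 3 μC L = twirl 3 μU L) :
    UnitarySym N G =
      UnitarySym N
        (Submonoid.closure
          {P : Op N | ∃ a : Fin N → Fin 4, P = pauli a ∧
            ∃ g ∈ G, Matrix.trace (g * pauli a) ≠ 0} : Set (Op N)) :=
  stmt8_general G μC μU hCsupp hUsupp hUinvL hdesign
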